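/- For every f ∈ Ω_f, the set D(f) := {ξ ∈ Ω_ξ : the closure of the interior of Ω_sl(ξ) equals the closure of Ω_sl(ξ) (closure and interior taken in ℝ^{N_L}), and ~Ω_sl(ξ, f) is dense in Ω_sl(ξ)} is dense in Ω_ξ (as a subset of ℝ^{2N_G+2E}). -/

import Mathlib

open Matrix

noncomputable section

/-- Parameter tuple ξ = (s̄, s̲, p̄, p̲). -/
abbrev XiT (NG E : ℕ) : Type := (Fin NG → ℝ) × (Fin NG → ℝ) × (Fin E → ℝ) × (Fin E → ℝ)

/-- Each column of `C` has exactly one `+1`, one `-1`, and zeros elsewhere. -/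
def IsIncidence {NG NL E : ℕ} (C : Matrix (Fin (NG + NL)) (Fin E) ℝ) : Prop :=
  ∀ e : Fin E, ∃ u v : Fin (NG + NL), u ≠ v ∧ C u e = 1 ∧ C v e = -1 ∧
    ∀ w : Fin (NG + NL), w ≠ u → w ≠ v → C w e = 0

/-- Connectedness: the kernel of `Cᵀ` consists exactly of the constant vectors. -/
def ConnectedIncidence {NG NL E : ℕ} (C : Matrix (Fin (NG + NL)) (Fin E) ℝ) : Prop :=
  ∀ x : Fin (NG + NL) → ℝ, Cᵀ *ᵥ x = 0 ↔ ∃ c : ℝ, x = fun _ => c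

/-- `B` is diagonal with strictly positive diagonal entries. -/
def PosDiag {E : ℕ} (B : Matrix (Fin E) (Fin E) ℝ) : Prop :=
  (∀ e, 0 < B e e) ∧ ∀ e e' : Fin E, e ≠ e' → B e e' = 0

/-- Feasibility of `(s^g, θ)` for the DC-OPF with limits `ξ` and loads `sl`. -/
def Feasible {NG NL E : ℕ} (C : Matrix (Fin (NG + NL)) (Fin E) ℝ)
    (B : Matrix (Fin E) (Fin E) ℝ) (ξ : XiT NG E) (sl : Fin NL → ℝ)
    (sg : Fin NG → ℝ) (θ : Fin (NG + NL) → ℝ) : Prop :=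
  (∀ h : 0 < NG + NL, θ ⟨0, h⟩ = 0) ∧
  (C * B * Cᵀ) *ᵥ θ = Fin.append sg (fun j => -(sl j)) ∧
  (∀ i, ξ.2.1 i ≤ sg i ∧ sg i ≤ ξ.1 i) ∧
  (∀ e, ξ.2.2.2 e ≤ ((B * Cᵀ) *ᵥ θ) e ∧ ((B * Cᵀ) *ᵥ θ) e ≤ ξ.2.2.1 e)

/-- The set Ω_ξ of admissible system limits. -/
def OmegaXi {NG NL E : ℕ} (C : Matrix (Fin (NG + NL)) (Fin E) ℝ)
    (B : Matrix (Fin E) (Fin E) ℝ) : Set (XiT NG E) :=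
  { ξ | (∀ i, 0 ≤ ξ.2.1 i) ∧ (∀ i, ξ.2.1 i < ξ.1 i) ∧ (∀ e, ξ.2.2.2 e < ξ.2.2.1 e) ∧
    ∃ sl : Fin NL → ℝ, (∀ j, 0 < sl j) ∧ ∃ sg θ, Feasible C B ξ sl sg θ }

/-- The set Ω_sl(ξ) of strictly positive feasible load profiles. -/
def OmegaSl {NG NL E : ℕ} (C : Matrix (Fin (NG + NL)) (Fin E) ℝ)
    (B : Matrix (Fin E) (Fin E) ℝ) (ξ : XiT NG E) : Set (Fin NL → ℝ) :=
  { sl | (∀ j, 0 < sl j) ∧ ∃ sg θ, Feasible C B ξ sl sg θ }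

/-- `(sg, θ)` is an optimal solution of the DC-OPF. -/
def IsOptimal {NG NL E : ℕ} (C : Matrix (Fin (NG + NL)) (Fin E) ℝ)
    (B : Matrix (Fin E) (Fin E) ℝ) (f : Fin NG → ℝ) (ξ : XiT NG E)
    (sl : Fin NL → ℝ) (sg : Fin NG → ℝ) (θ : Fin (NG + NL) → ℝ) : Prop :=
  Feasible C B ξ sl sg θ ∧
  ∀ sg' θ', Feasible C B ξ sl sg' θ' → f ⬝ᵥ sg ≤ f ⬝ᵥ sg'

/-- The matrix M: first N rows are C B Cᵀ, last row is e₁ᵀ. -/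
def Mmat {NG NL E : ℕ} (C : Matrix (Fin (NG + NL)) (Fin E) ℝ)
    (B : Matrix (Fin E) (Fin E) ℝ) : Matrix (Fin (NG + NL + 1)) (Fin (NG + NL)) ℝ :=
  Matrix.of fun i j => if h : (i : ℕ) < NG + NL then (C * B * Cᵀ) ⟨(i : ℕ), h⟩ j
    else if (j : ℕ) = 0 then 1 else 0

/-- KKT point for the DC-OPF. -/
def IsKKT {NG NL E : ℕ} (C : Matrix (Fin (NG + NL)) (Fin E) ℝ)
    (B : Matrix (Fin E) (Fin E) ℝ) (f : Fin NG → ℝ) (ξ : XiT NG E)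
    (sl : Fin NL → ℝ) (sg : Fin NG → ℝ) (θ : Fin (NG + NL) → ℝ)
    (τ : Fin (NG + NL + 1) → ℝ) (μp μm : Fin E → ℝ) (lp lm : Fin NG → ℝ) : Prop :=
  Feasible C B ξ sl sg θ ∧
  (Mmat C B)ᵀ *ᵥ τ + (C * B) *ᵥ (μp - μm) = 0 ∧
  (∀ i : Fin NG, -f i = -τ (Fin.castLE (by omega) i) + lp i - lm i) ∧
  (∀ e, 0 ≤ μp e) ∧ (∀ e, 0 ≤ μm e) ∧ (∀ i, 0 ≤ lp i) ∧ (∀ i, 0 ≤ lm i) ∧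
  μp ⬝ᵥ (((B * Cᵀ) *ᵥ θ) - ξ.2.2.1) = 0 ∧
  μm ⬝ᵥ (ξ.2.2.2 - ((B * Cᵀ) *ᵥ θ)) = 0 ∧
  lp ⬝ᵥ (sg - ξ.1) = 0 ∧
  lm ⬝ᵥ (ξ.2.1 - sg) = 0

/-- ℓ₀ "norm": number of nonzero entries. -/
def nnz {n : ℕ} (v : Fin n → ℝ) : ℕ := Set.ncard { i | v i ≠ 0 }

/-- The set Ω_f of well-behaved cost vectors. -/
def OmegaF {NG NL E : ℕ} (C : Matrix (Fin (NG + NL)) (Fin E) ℝ)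
    (B : Matrix (Fin E) (Fin E) ℝ) : Set (Fin NG → ℝ) :=
  { f | (∀ i, 0 ≤ f i) ∧
    ∀ ξ ∈ OmegaXi C B, ∀ sl ∈ OmegaSl C B ξ,
      (∃! p : (Fin NG → ℝ) × (Fin (NG + NL) → ℝ), IsOptimal C B f ξ sl p.1 p.2) ∧
      ∀ sg θ τ μp μm lp lm, IsKKT C B f ξ sl sg θ τ μp μm lp lm →
        NG - 1 ≤ nnz μp + nnz μm + nnz lp + nnz lm }

/-- Number of binding inequality constraints at `(sg, θ)` (among the 2N_G + 2E). -/
def bindingCount {NG NL E : ℕ} (C : Matrix (Fin (NG + NL)) (Fin E) ℝ)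
    (B : Matrix (Fin E) (Fin E) ℝ) (ξ : XiT NG E) (sg : Fin NG → ℝ)
    (θ : Fin (NG + NL) → ℝ) : ℕ :=
  Set.ncard { i : Fin NG | sg i = ξ.1 i } + Set.ncard { i : Fin NG | sg i = ξ.2.1 i } +
  Set.ncard { e : Fin E | ((B * Cᵀ) *ᵥ θ) e = ξ.2.2.1 e } +
  Set.ncard { e : Fin E | ((B * Cᵀ) *ᵥ θ) e = ξ.2.2.2 e }

/-- ~Ω_sl(ξ, f): loads with exactly N_G − 1 binding constraints at the optimum. -/
def TOmegaSl {NG NL E : ℕ} (C : Matrix (Fin (NG + NL)) (Fin E) ℝ)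
    (B : Matrix (Fin E) (Fin E) ℝ) (f : Fin NG → ℝ) (ξ : XiT NG E) :
    Set (Fin NL → ℝ) :=
  { sl | sl ∈ OmegaSl C B ξ ∧
    ∀ sg θ, IsOptimal C B f ξ sl sg θ → bindingCount C B ξ sg θ = NG - 1 }

/-- Indices of binding inequality constraints:
`inl i` = upper generation, `inr (inl i)` = lower generation,
`inr (inr (inl e))` = upper flow, `inr (inr (inr e))` = lower flow. -/
def BindingIdx {NG NL E : ℕ} (C : Matrix (Fin (NG + NL)) (Fin E) ℝ)
    (B : Matrix (Fin E) (Fin E) ℝ) (ξ : XiT NG E) (sg : Fin NG → ℝ)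
    (θ : Fin (NG + NL) → ℝ) : Set (Fin NG ⊕ Fin NG ⊕ Fin E ⊕ Fin E) :=
  { c | match c with
    | Sum.inl i => sg i = ξ.1 i
    | Sum.inr (Sum.inl i) => sg i = ξ.2.1 i
    | Sum.inr (Sum.inr (Sum.inl e)) => ((B * Cᵀ) *ᵥ θ) e = ξ.2.2.1 e
    | Sum.inr (Sum.inr (Sum.inr e)) => ((B * Cᵀ) *ᵥ θ) e = ξ.2.2.2 e }

/-- Gradients of the N + 1 equality constraints, as vectors in ℝ^{N_G} × ℝ^{N}. -/
def eqGrad {NG NL E : ℕ} (C : Matrix (Fin (NG + NL)) (Fin E) ℝ)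
    (B : Matrix (Fin E) (Fin E) ℝ) :
    (Unit ⊕ Fin (NG + NL)) → (Fin NG → ℝ) × (Fin (NG + NL) → ℝ)
  | Sum.inl _ => (0, fun j => if (j : ℕ) = 0 then 1 else 0)
  | Sum.inr i => ((fun k : Fin NG => if (k : ℕ) = (i : ℕ) then -1 else 0),
      fun j => (C * B * Cᵀ) i j)

/-- Gradients of the inequality constraints. -/
def ineqGrad {NG NL E : ℕ} (C : Matrix (Fin (NG + NL)) (Fin E) ℝ)
    (B : Matrix (Fin E) (Fin E) ℝ) :
    (Fin NG ⊕ Fin NG ⊕ Fin E ⊕ Fin E) → (Fin NG → ℝ) × (Fin (NG + NL) → ℝ)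
  | Sum.inl i => (Pi.single i 1, 0)
  | Sum.inr (Sum.inl i) => (-Pi.single i 1, 0)
  | Sum.inr (Sum.inr (Sum.inl e)) => (0, fun j => (B * Cᵀ) e j)
  | Sum.inr (Sum.inr (Sum.inr e)) => (0, fun j => -(B * Cᵀ) e j)

/-- The family of gradients of all equality constraints together with the binding
inequality constraints at `(sg, θ)`. -/
def fullGrad {NG NL E : ℕ} (C : Matrix (Fin (NG + NL)) (Fin E) ℝ)
    (B : Matrix (Fin E) (Fin E) ℝ) (ξ : XiT NG E) (sg : Fin NG → ℝ)
    (θ : Fin (NG + NL) → ℝ) :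
    ((Unit ⊕ Fin (NG + NL)) ⊕ ↥(BindingIdx C B ξ sg θ)) →
      (Fin NG → ℝ) × (Fin (NG + NL) → ℝ) :=
  fun i => match i with
    | Sum.inl j => eqGrad C B j
    | Sum.inr c => ineqGrad C B c.1

/-- S_G ⊥ S_B : the equality-constraint gradients together with the gradients
`(e_i, 0)`, `i ∈ S_G`, and `(0, row e of B Cᵀ)`, `e ∈ S_B`, are linearly independent. -/
def Perp {NG NL E : ℕ} (C : Matrix (Fin (NG + NL)) (Fin E) ℝ)
    (B : Matrix (Fin E) (Fin E) ℝ) (SG : Finset (Fin NG)) (SB : Finset (Fin E)) : Prop :=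
  LinearIndependent ℝ (fun i : (Unit ⊕ Fin (NG + NL)) ⊕ (↥SG ⊕ ↥SB) =>
    match i with
    | Sum.inl j => eqGrad C B j
    | Sum.inr (Sum.inl g) => ((Pi.single (g : Fin NG) 1 : Fin NG → ℝ), (0 : Fin (NG + NL) → ℝ))
    | Sum.inr (Sum.inr e) => ((0 : Fin NG → ℝ), fun j => (B * Cᵀ) (e : Fin E) j))

/-- The OPF operator: the generation part of the (unique) optimal solution. -/
def OPFmap {NG NL E : ℕ} (C : Matrix (Fin (NG + NL)) (Fin E) ℝ)
    (B : Matrix (Fin E) (Fin E) ℝ) (f : Fin NG → ℝ) (ξ : XiT NG E)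
    (sl : Fin NL → ℝ) : Fin NG → ℝ := by
  classical
  exact if h : ∃ p : (Fin NG → ℝ) × (Fin (NG + NL) → ℝ), IsOptimal C B f ξ sl p.1 p.2
    then h.choose.1 else 0

/-- The matrix R(S_G, S_B)ᵀ: rows N_G+1,…,N of C B Cᵀ; the rows of C B Cᵀ indexed
by S_G; the rows of B Cᵀ indexed by S_B; and e₁ᵀ. -/
def Rmat {NG NL E : ℕ} (C : Matrix (Fin (NG + NL)) (Fin E) ℝ)
    (B : Matrix (Fin E) (Fin E) ℝ) (SG : Finset (Fin NG)) (SB : Finset (Fin E)) :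
    Matrix ((Fin NL ⊕ (↥SG ⊕ ↥SB)) ⊕ Unit) (Fin (NG + NL)) ℝ :=
  Matrix.of fun i j => match i with
    | Sum.inl (Sum.inl k) => (C * B * Cᵀ) (Fin.natAdd NG k) j
    | Sum.inl (Sum.inr (Sum.inl g)) => (C * B * Cᵀ) (Fin.castAdd NL (g : Fin NG)) j
    | Sum.inl (Sum.inr (Sum.inr e)) => (B * Cᵀ) (e : Fin E) j
    | Sum.inr _ => if (j : ℕ) = 0 then 1 else 0

/-- The matrix Π applied to a load vector: embeds ℝ^{N_L} in the row-index space. -/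
def padSl {NG NL E : ℕ} (SG : Finset (Fin NG)) (SB : Finset (Fin E))
    (v : Fin NL → ℝ) : (Fin NL ⊕ (↥SG ⊕ ↥SB)) ⊕ Unit → ℝ
  | Sum.inl (Sum.inl k) => v k
  | _ => 0

/-- J(S_G, S_B) as a map: v ↦ −G (R(S_G,S_B)ᵀ)⁻¹ Π v, where G consists of the
first N_G rows of C B Cᵀ. -/
def JFun {NG NL E : ℕ} (C : Matrix (Fin (NG + NL)) (Fin E) ℝ)
    (B : Matrix (Fin E) (Fin E) ℝ) (SG : Finset (Fin NG)) (SB : Finset (Fin E))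
    (v : Fin NL → ℝ) : Fin NG → ℝ :=
  fun i =>
    -(((C * B * Cᵀ) *ᵥ (Function.invFun (Rmat C B SG SB).mulVec (padSl SG SB v)))
      (Fin.castAdd NL i))

/-- J(S_G, S_B) as an N_G × N_L matrix. -/
def Jmatrix {NG NL E : ℕ} (C : Matrix (Fin (NG + NL)) (Fin E) ℝ)
    (B : Matrix (Fin E) (Fin E) ℝ) (SG : Finset (Fin NG)) (SB : Finset (Fin E)) :
    Matrix (Fin NG) (Fin NL) ℝ :=
  Matrix.of fun i j => JFun C B SG SB (Pi.single j 1) i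

/-!
Parametrize the feasible points by the grounded phase angles `θ`, a space of dimension `N - 1` on
which the load map is surjective onto `ℝ^{N_L}`. A unique optimum is a vertex of its feasible
polytope, so at least `(N - 1) - N_L = N_G - 1` limits bind there. Conversely, if `N_G` limits bind
at `θ`, then by counting dimensions some nontrivial linear combination of these limits is a linear
function of the load. For generic limits each of the finitely many such relations confines the load
to a proper, possibly empty, affine subspace, so for a dense set of loads at most `N_G - 1` limits
bind. The closures are controlled by convexity: `Ω_ξ` and each `Ω_sl(ξ)` with `ξ` interior to
`Ω_ξ` are convex with nonempty interior.
-/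

section Genericity

open Module

variable {K V W U : Type*} [Field K] [AddCommGroup V] [Module K V] [FiniteDimensional K V]
  [AddCommGroup W] [Module K W] [AddCommGroup U] [Module K U]

theorem exists_dual_comp_eq_of_finrank_lt {D : V →ₗ[K] W} (hD : Function.Surjective D)
    (A : V →ₗ[K] U) (h : finrank K V < finrank K W + finrank K U) :
    ∃ (u : Dual K W) (w : Dual K U), w ≠ 0 ∧ ∀ v, w (A v) = u (D v) := by
  have hker : finrank K W + finrank K (LinearMap.ker D) = finrank K V := by
    rw [← LinearMap.finrank_range_add_finrank_ker D, LinearMap.range_eq_top.2 hD, finrank_top]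
  have hlt : (LinearMap.ker D).map A < ⊤ := Submodule.lt_top_of_finrank_lt_finrank <| by
    have := Submodule.finrank_map_le A (LinearMap.ker D)
    omega
  obtain ⟨w, hw, hle⟩ := Submodule.exists_le_ker_of_lt_top _ hlt
  have hmem : w ∘ₗ A ∈ LinearMap.range D.dualMap := by
    rw [LinearMap.range_dualMap_eq_dualAnnihilator_ker, Submodule.mem_dualAnnihilator]
    exact fun v hv => hle (Submodule.mem_map_of_mem hv)
  obtain ⟨u, hu⟩ := hmem
  exact ⟨u, w, hw, fun v => (LinearMap.congr_fun hu v).symm⟩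

end Genericity

section Density

open Module Set

theorem subset_closure_interior_inter {X : Type*} [TopologicalSpace X] {s t : Set X}
    (hs : s ⊆ closure (interior s)) (ht : Dense t) : s ⊆ closure (interior s ∩ t) :=
  hs.trans <| closure_minimal (ht.open_subset_closure_inter isOpen_interior) isClosed_closure

variable {W : Type*} [AddCommGroup W] [Module ℝ W] [TopologicalSpace W] [IsTopologicalAddGroup W]
  [ContinuousSMul ℝ W] [T2Space W] [FiniteDimensional ℝ W]

theorem dense_setOfPred_forall_dual_apply_ne {J : Type*} [Finite J] (u : J → Dual ℝ W) (r : J → ℝ)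
    (h : ∀ j, u j = 0 → r j ≠ 0) : Dense {x | ∀ j, u j x ≠ r j} := by
  have hopen (j : J) : IsOpen {x | u j x ≠ r j} :=
    isOpen_ne_fun (u j).continuous_of_finiteDimensional continuous_const
  have hdense (j : J) : Dense {x | u j x ≠ r j} := by
    by_cases hu : u j = 0
    · simp [hu, (h j hu).symm]
    · exact (dense_compl_singleton (r j)).preimage
        ((u j).isOpenMap_of_finiteDimensional (LinearMap.surjective hu))
  have := (finite_range fun j => {x | u j x ≠ r j}).dense_sInter
    (forall_mem_range.2 hopen) (forall_mem_range.2 hdense)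
  simpa [sInter_range, ← ofPred_forall] using this

theorem dense_setOfPred_dense_ncard_binding_add_finrank_le {V ι : Type*} [AddCommGroup V]
    [Module ℝ V] [FiniteDimensional ℝ V] [Finite ι] {D : V →ₗ[ℝ] W} (hD : Function.Surjective D)
    (A : V →ₗ[ℝ] ι → ℝ) :
    Dense {b : ι → ℝ | Dense {x | ∀ v, D v = x →
      {i | A v i = b i}.ncard + finrank ℝ W ≤ finrank ℝ V}} := by
  let restrict (S : Set ι) : (ι → ℝ) →ₗ[ℝ] (S → ℝ) := LinearMap.funLeft ℝ ℝ Subtype.val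
  have restrict_surjective (S : Set ι) : Function.Surjective (restrict S) :=
    LinearMap.funLeft_surjective_of_injective _ _ _ Subtype.val_injective
  let Oversized := {S : Set ι // finrank ℝ V < S.ncard + finrank ℝ W}
  have hrel (S : Oversized) : ∃ (u : Dual ℝ W) (w : Dual ℝ (S.1 → ℝ)), w ≠ 0 ∧
      ∀ v, w (restrict S.1 (A v)) = u (D v) := by
    have := Fintype.ofFinite S.1
    refine exists_dual_comp_eq_of_finrank_lt hD (restrict S.1 ∘ₗ A) ?_
    rw [finrank_fintype_fun_eq_card, ← Nat.card_eq_fintype_card, Nat.card_coe_set_eq, add_comm]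
    exact S.2
  choose u w hw huw using hrel
  have hw_restrict (S : Oversized) : w S ∘ₗ restrict S.1 ≠ 0 := fun h0 =>
    hw S <| LinearMap.ext fun y => by
      obtain ⟨b, rfl⟩ := restrict_surjective S.1 y
      exact LinearMap.congr_fun h0 b
  refine (dense_setOfPred_forall_dual_apply_ne (fun S => w S ∘ₗ restrict S.1) 0
    fun S h0 => absurd h0 (hw_restrict S)).mono fun b hb => ?_
  refine (dense_setOfPred_forall_dual_apply_ne u (fun S => w S (restrict S.1 b))
    fun S _ => hb S).mono fun x hx v hv => ?_
  by_contra! hlt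
  have hbinding : restrict {i | A v i = b i} (A v) = restrict {i | A v i = b i} b :=
    funext fun i => i.2
  exact hx ⟨_, hlt⟩ (by rw [← hbinding, huw, hv])

end Density

section Vertices

open Module Set

theorem eventually_add_smul_mem_Icc {κ : Type*} [Finite κ] {lo hi x d : κ → ℝ}
    (hx : x ∈ Icc lo hi) (hd : ∀ k, x k = lo k ∨ x k = hi k → d k = 0) :
    ∀ᶠ t : ℝ in nhds 0, x + t • d ∈ Icc lo hi := by
  have hcoord (k : κ) : ∀ᶠ t : ℝ in nhds 0, x k + t * d k ∈ Icc (lo k) (hi k) := by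
    by_cases hk : x k = lo k ∨ x k = hi k
    · simp [hd k hk, hx.1 k, hx.2 k]
    · push Not at hk
      have hcont : ContinuousAt (fun t : ℝ => x k + t * d k) 0 := by fun_prop
      refine hcont (Icc_mem_nhds ?_ ?_)
      · simpa using (hx.1 k).lt_of_ne hk.1.symm
      · simpa using (hx.2 k).lt_of_ne hk.2
  filter_upwards [Filter.eventually_all.2 hcoord] with t ht
  exact ⟨fun k => (ht k).1, fun k => (ht k).2⟩

variable {V W κ : Type*} [AddCommGroup V] [Module ℝ V] [AddCommGroup W] [Module ℝ W] [Finite κ]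
  {D : V →ₗ[ℝ] W} {A : V →ₗ[ℝ] κ → ℝ} {c : Dual ℝ V} {lo hi : κ → ℝ} {v : V}

theorem eq_zero_of_unique_minimizer (hv : A v ∈ Icc lo hi)
    (hmin : ∀ v', D v' = D v → A v' ∈ Icc lo hi → c v' ≤ c v → v' = v) {d : V} (hDd : D d = 0)
    (hd : ∀ k, A v k = lo k ∨ A v k = hi k → A d k = 0) : d = 0 := by
  wlog hc : c d ≤ 0 generalizing d
  · refine neg_eq_zero.1 (this (d := -d) (by simp [hDd]) (fun k hk => by simp [hd k hk]) ?_)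
    simpa using (not_le.1 hc).le
  obtain ⟨t, ht0, ht⟩ := (eventually_add_smul_mem_Icc hv hd).exists_gt
  have heq : v + t • d = v := hmin _ (by simp [hDd]) (by simpa using ht) <| by
    simpa using mul_nonpos_of_nonneg_of_nonpos ht0.le hc
  simpa [ht0.ne'] using heq

theorem finrank_le_finrank_add_ncard_binding_of_unique_minimizer [FiniteDimensional ℝ W]
    (hv : A v ∈ Icc lo hi)
    (hmin : ∀ v', D v' = D v → A v' ∈ Icc lo hi → c v' ≤ c v → v' = v) :
    finrank ℝ V ≤ finrank ℝ W + {k | A v k = lo k ∨ A v k = hi k}.ncard := by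
  set S := {k | A v k = lo k ∨ A v k = hi k}
  have := Fintype.ofFinite S
  let Φ : V →ₗ[ℝ] W × (S → ℝ) := D.prod (LinearMap.funLeft ℝ ℝ Subtype.val ∘ₗ A)
  have hinj : Function.Injective Φ := (injective_iff_map_eq_zero Φ).2 fun d hd =>
    eq_zero_of_unique_minimizer hv hmin (congrArg Prod.fst hd)
      fun k hk => congrFun (congrArg Prod.snd hd) ⟨k, hk⟩
  simpa [← Nat.card_eq_fintype_card, Nat.card_coe_set_eq]
    using LinearMap.finrank_le_finrank_of_injective hinj

end Vertices

theorem ncard_eq_ncard_preimage_inl_add_ncard_preimage_inr {α β : Type*} [Finite α] [Finite β]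
    (s : Set (α ⊕ β)) : s.ncard = (Sum.inl ⁻¹' s).ncard + (Sum.inr ⁻¹' s).ncard := by
  simp only [← Nat.card_coe_set_eq, ← Nat.card_sum]
  exact Nat.card_congr (Equiv.subtypeSum)

theorem PosDiag.posDef {E : ℕ} {B : Matrix (Fin E) (Fin E) ℝ} (hB : PosDiag B) : B.PosDef := by
  have hdiag : B = diagonal fun e => B e e := by
    ext e e'
    rcases eq_or_ne e e' with rfl | h
    · simp
    · rw [diagonal_apply_ne _ h, hB.2 e e' h]
  rw [hdiag]
  exact .diagonal hB.1

theorem mul_mul_transpose_mulVec_eq_zero_iff {m n : Type*} [Fintype m] [Fintype n]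
    {B : Matrix n n ℝ} (hB : B.PosDef) (C : Matrix m n ℝ) (x : m → ℝ) :
    (C * B * Cᵀ) *ᵥ x = 0 ↔ Cᵀ *ᵥ x = 0 := by
  refine ⟨fun h => ?_, fun h => by rw [← mulVec_mulVec, h, mulVec_zero]⟩
  by_contra hne
  have henergy : x ⬝ᵥ ((C * B * Cᵀ) *ᵥ x) = (Cᵀ *ᵥ x) ⬝ᵥ (B *ᵥ (Cᵀ *ᵥ x)) := by
    rw [Matrix.mul_assoc, ← mulVec_mulVec, dotProduct_mulVec, ← mulVec_transpose, ← mulVec_mulVec]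
  have hpos := hB.dotProduct_mulVec_pos hne
  rw [star_trivial, ← henergy, h, dotProduct_zero] at hpos
  exact hpos.false

namespace DCOPF

open Module Set

/-- The phase angle vectors satisfying the reference bus condition `θ₁ = 0` (bus `1` has index `0`).
They parametrize the solutions of the power balance equations. -/
def groundedAngles (N : ℕ) : Submodule ℝ (Fin N → ℝ) where
  carrier := {θ | ∀ h : 0 < N, θ ⟨0, h⟩ = 0}
  add_mem' hθ hθ' h := by simp [hθ h, hθ' h]
  zero_mem' _ := rfl
  smul_mem' r θ hθ h := by simp [hθ h]

theorem finrank_groundedAngles_add_one {N : ℕ} (hN : 0 < N) :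
    finrank ℝ (groundedAngles N) + 1 = N := by
  have hproj : (LinearMap.proj ⟨0, hN⟩ : Dual ℝ (Fin N → ℝ)) ≠ 0 := fun h => by
    simpa using LinearMap.congr_fun h 1
  have hker : groundedAngles N = LinearMap.ker (LinearMap.proj ⟨0, hN⟩ : Dual ℝ (Fin N → ℝ)) := by
    ext θ
    simp [groundedAngles, hN]
  rw [hker, Dual.finrank_ker_add_one_of_ne_zero hproj, finrank_fin_fun]

variable {NG NL E : ℕ}

section Network

variable {C : Matrix (Fin (NG + NL)) (Fin E) ℝ} {B : Matrix (Fin E) (Fin E) ℝ}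

theorem sum_laplacian_mulVec (hConn : ConnectedIncidence C) (B : Matrix (Fin E) (Fin E) ℝ)
    (θ : Fin (NG + NL) → ℝ) : ∑ i, ((C * B * Cᵀ) *ᵥ θ) i = 0 := by
  rw [← one_dotProduct, Matrix.mul_assoc, ← mulVec_mulVec, dotProduct_mulVec, ← mulVec_transpose,
    (hConn 1).2 ⟨1, rfl⟩, zero_dotProduct]

-- Grounded angles and balanced injections both have dimension `N - 1`, so injectivity suffices.
theorem exists_groundedAngles_laplacian_mulVec_eq (hNG : 0 < NG) (hConn : ConnectedIncidence C)
    (hB : B.PosDef) {y : Fin (NG + NL) → ℝ} (hy : ∑ i, y i = 0) :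
    ∃ θ : groundedAngles (NG + NL), (C * B * Cᵀ) *ᵥ θ = y := by
  have hN : 0 < NG + NL := by omega
  let total : Dual ℝ (Fin (NG + NL) → ℝ) := ∑ i, LinearMap.proj i
  have total_apply (x : Fin (NG + NL) → ℝ) : total x = ∑ i, x i := by simp [total]
  have htotal : total ≠ 0 := fun h => by
    simpa [total_apply] using LinearMap.congr_fun h (Pi.single ⟨0, hN⟩ 1)
  let Φ : groundedAngles (NG + NL) →ₗ[ℝ] LinearMap.ker total :=
    ((C * B * Cᵀ).mulVecLin ∘ₗ (groundedAngles _).subtype).codRestrict _ fun θ => by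
      rw [LinearMap.mem_ker, total_apply]
      exact sum_laplacian_mulVec hConn B θ
  have hinj : Function.Injective Φ := (injective_iff_map_eq_zero Φ).2 fun θ hθ => by
    obtain ⟨a, ha⟩ := (hConn θ).1 <|
      (mul_mul_transpose_mulVec_eq_zero_iff hB C θ).1 (congrArg Subtype.val hθ)
    have ha0 : a = 0 := by simpa [ha] using θ.2 hN
    ext i
    simp [ha, ha0]
  have hdim : finrank ℝ (groundedAngles (NG + NL)) = finrank ℝ (LinearMap.ker total) := by
    have := finrank_groundedAngles_add_one hN
    have := Dual.finrank_ker_add_one_of_ne_zero htotal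
    rw [finrank_fin_fun] at this
    omega
  obtain ⟨θ, hθ⟩ := (LinearMap.injective_iff_surjective_of_finrank_eq_finrank hdim).1 hinj
    ⟨y, by rwa [LinearMap.mem_ker, total_apply]⟩
  exact ⟨θ, congrArg Subtype.val hθ⟩

variable (C B)

/-- The generation `s^g` at the first `N_G` buses induced by the phase angles. -/
def generation : groundedAngles (NG + NL) →ₗ[ℝ] (Fin NG → ℝ) :=
  LinearMap.funLeft ℝ ℝ (Fin.castAdd NL) ∘ₗ (C * B * Cᵀ).mulVecLin ∘ₗ (groundedAngles _).subtype

/-- The load `s^l` at the last `N_L` buses served by the phase angles; a load is a negative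
injection. -/
def load : groundedAngles (NG + NL) →ₗ[ℝ] (Fin NL → ℝ) :=
  -(LinearMap.funLeft ℝ ℝ (Fin.natAdd NG) ∘ₗ (C * B * Cᵀ).mulVecLin ∘ₗ
    (groundedAngles _).subtype)

/-- The quantities subject to limits, as functions of the phase angles: the generation at each
generator followed by the flow on each line. -/
def monitored : groundedAngles (NG + NL) →ₗ[ℝ] (Fin NG ⊕ Fin E → ℝ) where
  toFun θ := Sum.elim (generation C B θ) ((B * Cᵀ) *ᵥ θ)
  map_add' θ θ' := by ext (i | e) <;> simp [mulVec_add]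
  map_smul' r θ := by ext (i | e) <;> simp [mulVec_smul]

variable {C B}

theorem generation_apply (θ : groundedAngles (NG + NL)) (i : Fin NG) :
    generation C B θ i = ((C * B * Cᵀ) *ᵥ θ) (Fin.castAdd NL i) := rfl

theorem load_apply (θ : groundedAngles (NG + NL)) (j : Fin NL) :
    load C B θ j = -((C * B * Cᵀ) *ᵥ θ) (Fin.natAdd NG j) := rfl

theorem load_surjective (hNG : 0 < NG) (hConn : ConnectedIncidence C) (hB : B.PosDef) :
    Function.Surjective (load C B) := fun sl => by
  obtain ⟨θ, hθ⟩ := exists_groundedAngles_laplacian_mulVec_eq (NL := NL) hNG hConn hB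
    (y := Fin.append (fun _ => (∑ j, sl j) / NG) (-sl))
    (by simp [Fin.sum_univ_add, mul_div_cancel₀, hNG.ne'])
  exact ⟨θ, funext fun j => by rw [load_apply, hθ]; simp⟩

theorem exists_generation_pos_load_pos (hNG : 0 < NG) (hNL : 0 < NL)
    (hConn : ConnectedIncidence C) (hB : B.PosDef) :
    ∃ θ, (∀ i, 0 < generation C B θ i) ∧ ∀ j, 0 < load C B θ j := by
  obtain ⟨θ, hθ⟩ := exists_groundedAngles_laplacian_mulVec_eq hNG hConn hB
    (y := Fin.append (fun _ : Fin NG => (NL : ℝ)) fun _ : Fin NL => -(NG : ℝ))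
    (by simp [Fin.sum_univ_add, mul_comm])
  exact ⟨θ, fun i => by rw [generation_apply, hθ]; simp [hNL],
    fun j => by rw [load_apply, hθ]; simp [hNG]⟩

end Network

section Limits

/-- The upper limits `(s̄, p̄)` on the monitored quantities. -/
def upperLimit : XiT NG E →ₗ[ℝ] (Fin NG ⊕ Fin E → ℝ) where
  toFun ξ := Sum.elim ξ.1 ξ.2.2.1
  map_add' _ _ := by ext (i | e) <;> rfl
  map_smul' _ _ := by ext (i | e) <;> rfl

/-- The lower limits `(s̲, p̲)` on the monitored quantities. -/
def lowerLimit : XiT NG E →ₗ[ℝ] (Fin NG ⊕ Fin E → ℝ) where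
  toFun ξ := Sum.elim ξ.2.1 ξ.2.2.2
  map_add' _ _ := by ext (i | e) <;> rfl
  map_smul' _ _ := by ext (i | e) <;> rfl

theorem continuous_upperLimit : Continuous (upperLimit : XiT NG E → _) :=
  upperLimit.continuous_of_finiteDimensional

theorem continuous_lowerLimit : Continuous (lowerLimit : XiT NG E → _) :=
  lowerLimit.continuous_of_finiteDimensional

/-- All limits as a single family, upper limits first, so that each binding constraint has its own
index. -/
def limits : XiT NG E →ₗ[ℝ] ((Fin NG ⊕ Fin E) ⊕ (Fin NG ⊕ Fin E) → ℝ) where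
  toFun ξ := Sum.elim (upperLimit ξ) (lowerLimit ξ)
  map_add' _ _ := by ext (k | k) <;> simp
  map_smul' _ _ := by ext (k | k) <;> simp

theorem limits_surjective : Function.Surjective (limits : XiT NG E →ₗ[ℝ] _) := fun b =>
  ⟨(fun i => b (.inl (.inl i)), fun i => b (.inr (.inl i)), fun e => b (.inl (.inr e)),
    fun e => b (.inr (.inr e))), by ext ((i | e) | (i | e)) <;> rfl⟩

end Limits

section SecureAngles

variable (C : Matrix (Fin (NG + NL)) (Fin E) ℝ) (B : Matrix (Fin E) (Fin E) ℝ)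

/-- The phase angles that serve positive loads within the limits `ξ`; `Ω_sl(ξ)` is their image
under `load`. -/
def secureAngles (ξ : XiT NG E) : Set (groundedAngles (NG + NL)) :=
  {θ | (∀ j, 0 < load C B θ j) ∧ monitored C B θ ∈ Icc (lowerLimit ξ) (upperLimit ξ)}

/-- The phase angles that serve positive loads with no limit of `ξ` binding, an open subset of
`secureAngles`. -/
def strictlySecureAngles (ξ : XiT NG E) : Set (groundedAngles (NG + NL)) :=
  {θ | (∀ j, 0 < load C B θ j) ∧ ∀ k, monitored C B θ k ∈ Ioo (lowerLimit ξ k) (upperLimit ξ k)}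

variable {C B}

theorem strictlySecureAngles_subset (ξ : XiT NG E) :
    strictlySecureAngles C B ξ ⊆ secureAngles C B ξ := fun _ hθ =>
  ⟨hθ.1, fun k => (hθ.2 k).1.le, fun k => (hθ.2 k).2.le⟩

theorem isOpen_strictlySecureAngles (ξ : XiT NG E) : IsOpen (strictlySecureAngles C B ξ) := by
  have hload := (load C B).continuous_of_finiteDimensional
  have hmon := (monitored C B).continuous_of_finiteDimensional
  simp only [strictlySecureAngles, ofPred_and, ofPred_forall]
  exact (isOpen_iInter_of_finite fun j => isOpen_lt continuous_const (by fun_prop)).inter <|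
    isOpen_iInter_of_finite fun k => isOpen_Ioo.preimage (by fun_prop)

theorem smul_add_smul_mem_secureAngles {ξ η : XiT NG E} {θ θ' : groundedAngles (NG + NL)}
    (hθ : θ ∈ secureAngles C B ξ) (hθ' : θ' ∈ secureAngles C B η) {a b : ℝ} (ha : 0 ≤ a)
    (hb : 0 ≤ b) (hab : a + b = 1) :
    a • θ + b • θ' ∈ secureAngles C B (a • ξ + b • η) := by
  refine ⟨fun j => ?_, ?_⟩
  · simpa using convex_Ioi (0 : ℝ) (hθ.1 j) (hθ'.1 j) ha hb hab
  · simp only [map_add, map_smul]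
    exact ⟨add_le_add (smul_le_smul_of_nonneg_left hθ.2.1 ha)
      (smul_le_smul_of_nonneg_left hθ'.2.1 hb), add_le_add (smul_le_smul_of_nonneg_left hθ.2.2 ha)
      (smul_le_smul_of_nonneg_left hθ'.2.2 hb)⟩

theorem feasible_iff {ξ : XiT NG E} {sl : Fin NL → ℝ} {sg : Fin NG → ℝ}
    {θ : Fin (NG + NL) → ℝ} :
    Feasible C B ξ sl sg θ ↔ ∃ h : θ ∈ groundedAngles (NG + NL), load C B ⟨θ, h⟩ = sl ∧
      generation C B ⟨θ, h⟩ = sg ∧ monitored C B ⟨θ, h⟩ ∈ Icc (lowerLimit ξ) (upperLimit ξ) := by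
  constructor
  · rintro ⟨hθ, hbal, hsg, hflow⟩
    have hload : load C B ⟨θ, hθ⟩ = sl := funext fun j => by rw [load_apply, hbal]; simp
    have hgen : generation C B ⟨θ, hθ⟩ = sg := funext fun i => by rw [generation_apply, hbal]; simp
    subst hgen
    exact ⟨hθ, hload, rfl, Sum.rec (fun i => (hsg i).1) fun e => (hflow e).1,
      Sum.rec (fun i => (hsg i).2) fun e => (hflow e).2⟩
  · rintro ⟨hθ, rfl, rfl, hlo, hup⟩
    refine ⟨hθ, funext <| Fin.addCases (fun i => ?_) fun j => ?_,
      fun i => ⟨hlo (.inl i), hup (.inl i)⟩, fun e => ⟨hlo (.inr e), hup (.inr e)⟩⟩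
    · rw [Fin.append_left, generation_apply]
    · rw [Fin.append_right, load_apply, neg_neg]

theorem omegaSl_eq_image_load (ξ : XiT NG E) : OmegaSl C B ξ = load C B '' secureAngles C B ξ := by
  ext sl
  constructor
  · rintro ⟨hpos, sg, θ, hfeas⟩
    obtain ⟨hθ, rfl, -, hmon⟩ := feasible_iff.1 hfeas
    exact ⟨⟨θ, hθ⟩, ⟨hpos, hmon⟩, rfl⟩
  · rintro ⟨θ, ⟨hpos, hmon⟩, rfl⟩
    exact ⟨hpos, generation C B θ, θ, feasible_iff.2 ⟨θ.2, rfl, rfl, hmon⟩⟩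

theorem mem_omegaXi_iff {ξ : XiT NG E} :
    ξ ∈ OmegaXi C B ↔ (∀ i, 0 ≤ ξ.2.1 i) ∧ (∀ k, lowerLimit ξ k < upperLimit ξ k) ∧
      (secureAngles C B ξ).Nonempty := by
  have hload : (∃ sl : Fin NL → ℝ, (∀ j, 0 < sl j) ∧ ∃ sg θ, Feasible C B ξ sl sg θ) ↔
      (secureAngles C B ξ).Nonempty := by
    rw [← image_nonempty, ← omegaSl_eq_image_load]
    rfl
  rw [← hload, Sum.forall, and_assoc]
  rfl

theorem convex_omegaXi : Convex ℝ (OmegaXi C B) := by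
  intro ξ hξ η hη a b ha hb hab
  obtain ⟨hξ₀, hξ_lt, θ, hθ⟩ := mem_omegaXi_iff.1 hξ
  obtain ⟨hη₀, hη_lt, θ', hθ'⟩ := mem_omegaXi_iff.1 hη
  refine mem_omegaXi_iff.2 ⟨fun i => ?_, fun k => ?_,
    _, smul_add_smul_mem_secureAngles hθ hθ' ha hb hab⟩
  · exact convex_Ici (0 : ℝ) (hξ₀ i) (hη₀ i) ha hb hab
  · have := convex_Ioi (0 : ℝ) (sub_pos.2 (hξ_lt k)) (sub_pos.2 (hη_lt k)) ha hb hab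
    simp only [mem_Ioi, smul_eq_mul, map_add, map_smul, Pi.add_apply, Pi.smul_apply] at this ⊢
    linarith

theorem mem_interior_omegaXi {ξ : XiT NG E} (hξ : ∀ i, 0 < ξ.2.1 i)
    (hstrict : (strictlySecureAngles C B ξ).Nonempty) : ξ ∈ interior (OmegaXi C B) := by
  obtain ⟨θ, hload, hmon⟩ := hstrict
  have hup := continuous_upperLimit (NG := NG) (E := E)
  have hlo := continuous_lowerLimit (NG := NG) (E := E)
  have hpos_near : ∀ᶠ η : XiT NG E in nhds ξ, ∀ i, 0 < η.2.1 i := Filter.eventually_all.2 fun i =>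
    (isOpen_lt (by fun_prop) (by fun_prop)).mem_nhds (hξ i)
  have hlo_near : ∀ᶠ η : XiT NG E in nhds ξ, ∀ k, lowerLimit η k < monitored C B θ k :=
    Filter.eventually_all.2 fun k =>
      (isOpen_lt (by fun_prop) (by fun_prop)).mem_nhds (hmon k).1
  have hup_near : ∀ᶠ η : XiT NG E in nhds ξ, ∀ k, monitored C B θ k < upperLimit η k :=
    Filter.eventually_all.2 fun k =>
      (isOpen_lt (by fun_prop) (by fun_prop)).mem_nhds (hmon k).2
  rw [mem_interior_iff_mem_nhds]
  filter_upwards [hpos_near, hlo_near, hup_near] with η h₀ h₁ h₂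
  exact mem_omegaXi_iff.2 ⟨fun i => (h₀ i).le, fun k => (h₁ k).trans (h₂ k), θ,
    strictlySecureAngles_subset η ⟨hload, fun k => ⟨h₁ k, h₂ k⟩⟩⟩

-- Tightening every limit of an interior `ξ` by a small amount keeps some load feasible.
theorem nonempty_strictlySecureAngles {ξ : XiT NG E} (hξ : ξ ∈ interior (OmegaXi C B)) :
    (strictlySecureAngles C B ξ).Nonempty := by
  let tightened (t : ℝ) : XiT NG E := ξ + t • (-1, 1, -1, 1)
  have hcont : ContinuousAt tightened 0 := by fun_prop
  have htightened₀ : tightened 0 = ξ := by simp only [tightened, zero_smul, add_zero]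
  have hnear : ∀ᶠ t in nhds 0, tightened t ∈ OmegaXi C B :=
    hcont (mem_interior_iff_mem_nhds.1 (htightened₀.symm ▸ hξ))
  obtain ⟨t, ht0, ht⟩ := hnear.exists_gt
  obtain ⟨-, -, θ, hload, hlo, hup⟩ := mem_omegaXi_iff.1 ht
  have hlo_eq (k) : lowerLimit (tightened t) k = lowerLimit ξ k + t := by
    rcases k with i | e <;> simp [lowerLimit, tightened]
  have hup_eq (k) : upperLimit (tightened t) k = upperLimit ξ k - t := by
    rcases k with i | e <;> simp [upperLimit, tightened, sub_eq_add_neg]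
  refine ⟨θ, hload, fun k => ⟨?_, ?_⟩⟩
  · linarith [hlo k, hlo_eq k]
  · linarith [hup k, hup_eq k]

theorem nonempty_interior_omegaXi (hNG : 0 < NG) (hNL : 0 < NL) (hConn : ConnectedIncidence C)
    (hB : B.PosDef) : (interior (OmegaXi C B)).Nonempty := by
  obtain ⟨θ, hgen, hload⟩ := exists_generation_pos_load_pos hNG hNL hConn hB
  let flow : Fin E → ℝ := (B * Cᵀ) *ᵥ θ
  refine ⟨((2 : ℝ) • generation C B θ, (1 / 2 : ℝ) • generation C B θ, flow + 1, flow - 1),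
    mem_interior_omegaXi (fun i => by simp [hgen i]) ⟨θ, hload, ?_⟩⟩
  rintro (i | e)
  · change (1 / 2 : ℝ) * generation C B θ i < generation C B θ i ∧
      generation C B θ i < 2 * generation C B θ i
    constructor <;> linarith [hgen i]
  · constructor <;> simp [monitored, lowerLimit, upperLimit, flow]

theorem omegaXi_subset_closure_interior (hNG : 0 < NG) (hNL : 0 < NL)
    (hConn : ConnectedIncidence C) (hB : B.PosDef) :
    OmegaXi C B ⊆ closure (interior (OmegaXi C B)) := by
  rw [convex_omegaXi.closure_interior_eq_closure_of_nonempty_interior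
    (nonempty_interior_omegaXi hNG hNL hConn hB)]
  exact subset_closure

theorem convex_omegaSl (ξ : XiT NG E) : Convex ℝ (OmegaSl C B ξ) := by
  rw [omegaSl_eq_image_load]
  refine Convex.linear_image (fun θ hθ θ' hθ' a b ha hb hab => ?_) (load C B)
  simpa only [Convex.combo_self hab] using smul_add_smul_mem_secureAngles hθ hθ' ha hb hab

theorem closure_interior_omegaSl (hNG : 0 < NG) (hConn : ConnectedIncidence C) (hB : B.PosDef)
    {ξ : XiT NG E} (hξ : ξ ∈ interior (OmegaXi C B)) :
    closure (interior (OmegaSl C B ξ)) = closure (OmegaSl C B ξ) := by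
  refine (convex_omegaSl ξ).closure_interior_eq_closure_of_nonempty_interior ?_
  refine ((nonempty_strictlySecureAngles hξ).image (load C B)).mono (interior_maximal ?_ ?_)
  · rw [omegaSl_eq_image_load]
    exact image_mono (strictlySecureAngles_subset ξ)
  · exact (load C B).isOpenMap_of_finiteDimensional (load_surjective hNG hConn hB) _
      (isOpen_strictlySecureAngles ξ)

end SecureAngles

section BindingCount

variable {C : Matrix (Fin (NG + NL)) (Fin E) ℝ} {B : Matrix (Fin E) (Fin E) ℝ}

theorem bindingCount_eq_ncard_upper_add_ncard_lower (ξ : XiT NG E)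
    (θ : groundedAngles (NG + NL)) :
    bindingCount C B ξ (generation C B θ) θ = {k | monitored C B θ k = upperLimit ξ k}.ncard +
      {k | monitored C B θ k = lowerLimit ξ k}.ncard := by
  rw [bindingCount, ncard_eq_ncard_preimage_inl_add_ncard_preimage_inr {k | _ = upperLimit ξ k},
    ncard_eq_ncard_preimage_inl_add_ncard_preimage_inr {k | _ = lowerLimit ξ k},
    add_add_add_comm, ← add_assoc]
  rfl

theorem bindingCount_eq_ncard_limits (ξ : XiT NG E) (θ : groundedAngles (NG + NL)) :
    bindingCount C B ξ (generation C B θ) θ =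
      {k | monitored C B θ (k.elim id id) = limits ξ k}.ncard := by
  rw [bindingCount_eq_ncard_upper_add_ncard_lower,
    ncard_eq_ncard_preimage_inl_add_ncard_preimage_inr {k | _ = limits ξ k}]
  rfl

theorem dense_setOfPred_dense_bindingCount_le (hNG : 0 < NG) (hConn : ConnectedIncidence C)
    (hB : B.PosDef) : Dense {ξ : XiT NG E | Dense {sl | ∀ sg θ, Feasible C B ξ sl sg θ →
      bindingCount C B ξ sg θ ≤ NG - 1}} := by
  refine ((dense_setOfPred_dense_ncard_binding_add_finrank_le (load_surjective hNG hConn hB)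
    (LinearMap.funLeft ℝ ℝ (Sum.elim id id) ∘ₗ monitored C B)).preimage
    (limits.isOpenMap_of_finiteDimensional limits_surjective)).mono fun ξ hξ => ?_
  refine Dense.mono (fun sl hsl sg θ hfeas => ?_) hξ
  obtain ⟨hθ, hload, rfl, -⟩ := feasible_iff.1 hfeas
  have hcount : bindingCount C B ξ (generation C B ⟨θ, hθ⟩) θ + finrank ℝ (Fin NL → ℝ) ≤
      finrank ℝ (groundedAngles (NG + NL)) := by
    rw [bindingCount_eq_ncard_limits ξ ⟨θ, hθ⟩]
    exact hsl ⟨θ, hθ⟩ hload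
  have := finrank_groundedAngles_add_one (N := NG + NL) (by omega)
  rw [finrank_fin_fun] at hcount
  omega

theorem le_bindingCount (hNG : 0 < NG) {f : Fin NG → ℝ} {ξ : XiT NG E} {sl : Fin NL → ℝ}
    (huniq : ∃! p : (Fin NG → ℝ) × (Fin (NG + NL) → ℝ), IsOptimal C B f ξ sl p.1 p.2)
    {sg : Fin NG → ℝ} {θ : Fin (NG + NL) → ℝ} (hopt : IsOptimal C B f ξ sl sg θ) :
    NG - 1 ≤ bindingCount C B ξ sg θ := by
  obtain ⟨hθ, rfl, rfl, hmon⟩ := feasible_iff.1 hopt.1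
  let cost : Dual ℝ (groundedAngles (NG + NL)) := dotProductBilin ℝ ℝ f ∘ₗ generation C B
  have hmin (θ' : groundedAngles (NG + NL)) (hload : load C B θ' = load C B ⟨θ, hθ⟩)
      (hmon' : monitored C B θ' ∈ Icc (lowerLimit ξ) (upperLimit ξ))
      (hcost : cost θ' ≤ cost ⟨θ, hθ⟩) : θ' = ⟨θ, hθ⟩ := by
    have hopt' : IsOptimal C B f ξ (load C B ⟨θ, hθ⟩) (generation C B θ') θ' :=
      ⟨feasible_iff.2 ⟨θ'.2, hload, rfl, hmon'⟩,
        fun sg' θ'' h => le_trans hcost (hopt.2 sg' θ'' h)⟩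
    exact Subtype.ext <| congrArg Prod.snd <|
      huniq.unique (y₁ := (generation C B θ', θ')) (y₂ := (_, θ)) hopt' hopt
  have hdim := finrank_le_finrank_add_ncard_binding_of_unique_minimizer hmon hmin
  have hunion := ncard_union_le {k | monitored C B ⟨θ, hθ⟩ k = lowerLimit ξ k}
    {k | monitored C B ⟨θ, hθ⟩ k = upperLimit ξ k}
  rw [← ofPred_or] at hunion
  have := finrank_groundedAngles_add_one (N := NG + NL) (by omega)
  rw [finrank_fin_fun] at hdim
  rw [bindingCount_eq_ncard_upper_add_ncard_lower ξ ⟨θ, hθ⟩]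
  omega

end BindingCount

end DCOPF

open DCOPF in
theorem good_limits_dense_general {NG NL E : ℕ} (hNG : 0 < NG) (hNL : 0 < NL)
    {C : Matrix (Fin (NG + NL)) (Fin E) ℝ} {B : Matrix (Fin E) (Fin E) ℝ}
    (hConn : ConnectedIncidence C) (hB : B.PosDef) {f : Fin NG → ℝ}
    (hf : ∀ ξ ∈ OmegaXi C B, ∀ sl ∈ OmegaSl C B ξ,
      ∃! p : (Fin NG → ℝ) × (Fin (NG + NL) → ℝ), IsOptimal C B f ξ sl p.1 p.2) :
    OmegaXi C B ⊆ closure { ξ : XiT NG E | ξ ∈ OmegaXi C B ∧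
      closure (interior (OmegaSl C B ξ)) = closure (OmegaSl C B ξ) ∧
      OmegaSl C B ξ ⊆ closure (TOmegaSl C B f ξ) } := by
  refine (subset_closure_interior_inter (omegaXi_subset_closure_interior hNG hNL hConn hB)
    (dense_setOfPred_dense_bindingCount_le hNG hConn hB)).trans (closure_mono ?_)
  rintro ξ ⟨hξ, hgeneric⟩
  have hξ' := interior_subset hξ
  have hregular := closure_interior_omegaSl hNG hConn hB hξ
  refine ⟨hξ', hregular, (subset_closure_interior_inter
    (subset_closure.trans hregular.symm.subset) hgeneric).trans (closure_mono ?_)⟩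
  rintro sl ⟨hsl, hle⟩
  have hsl' := interior_subset hsl
  exact ⟨hsl', fun sg θ hopt =>
    (hle sg θ hopt.1).antisymm (le_bindingCount hNG (hf ξ hξ' sl hsl') hopt)⟩

theorem good_limits_dense {NG NL E : ℕ} (hNG : 0 < NG) (hNL : 0 < NL) (hE : 0 < E)
    (C : Matrix (Fin (NG + NL)) (Fin E) ℝ) (B : Matrix (Fin E) (Fin E) ℝ)
    (hInc : IsIncidence C) (hConn : ConnectedIncidence C) (hB : PosDiag B) :
    ∀ f ∈ OmegaF C B,
      OmegaXi C B ⊆ closure { ξ : XiT NG E | ξ ∈ OmegaXi C B ∧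
        closure (interior (OmegaSl C B ξ)) = closure (OmegaSl C B ξ) ∧
        OmegaSl C B ξ ⊆ closure (TOmegaSl C B f ξ) } := fun _ hf =>
  good_limits_dense_general hNG hNL hConn hB.posDef fun ξ hξ sl hsl => (hf.2 ξ hξ sl hsl).1

end
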